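/- arXiv:2307.02964 — 2 statements merged into one kernel-verified Lean document; each statement's English description precedes it below -/
import Mathlib

section
/- There exists a constant C ≥ 1, depending only on m, such that for every m×m complex matrix M one has C⁻¹·(‖[M,M*]‖ + Σ_{k=1}^{m} |b_k(M)|^{2/k}) ≤ ‖M‖² ≤ C·(‖[M,M*]‖ + Σ_{k=1}^{m} |b_k(M)|^{2/k}). -/
open Matrix

/-- The Frobenius norm of a complex square matrix. -/
noncomputable def frobNorm {m : ℕ} (A : Matrix (Fin m) (Fin m) ℂ) : ℝ :=
  Real.sqrt (∑ i, ∑ j, ‖A i j‖ ^ 2)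

lemma frob_continuous {m : ℕ} :
    Continuous (fun A : Matrix (Fin m) (Fin m) ℂ => frobNorm A) := by
  unfold frobNorm
  refine Real.continuous_sqrt.comp ?_
  refine continuous_finsetSum _ fun i _ => continuous_finsetSum _ fun j _ => ?_
  exact (continuous_norm.comp (continuous_id.matrix_elem i j)).pow 2

lemma frob_nonneg {m : ℕ} (A : Matrix (Fin m) (Fin m) ℂ) : 0 ≤ frobNorm A :=
  Real.sqrt_nonneg _

lemma frob_entry_le {m : ℕ} (A : Matrix (Fin m) (Fin m) ℂ) (i j : Fin m) :
    ‖A i j‖ ≤ frobNorm A := by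
  apply Real.le_sqrt_of_sq_le
  calc ‖A i j‖ ^ 2 ≤ ∑ j, ‖A i j‖ ^ 2 :=
        Finset.single_le_sum (f := fun j => ‖A i j‖ ^ 2) (fun _ _ => by positivity)
          (Finset.mem_univ j)
    _ ≤ _ := Finset.single_le_sum (f := fun i => ∑ j, ‖A i j‖ ^ 2)
          (fun _ _ => by positivity) (Finset.mem_univ i)

lemma frob_eq_zero {m : ℕ} {A : Matrix (Fin m) (Fin m) ℂ} (h : frobNorm A = 0) : A = 0 := by
  ext i j
  have := frob_entry_le A i j
  rw [h] at this
  simpa using this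

lemma frob_smul {m : ℕ} (A : Matrix (Fin m) (Fin m) ℂ) (t : ℝ) (ht : 0 ≤ t) :
    frobNorm ((t : ℂ) • A) = t * frobNorm A := by
  unfold frobNorm
  have : ∑ i, ∑ j, ‖((t : ℂ) • A) i j‖ ^ 2 = t ^ 2 * ∑ i, ∑ j, ‖A i j‖ ^ 2 := by
    simp [Finset.mul_sum, mul_pow]
  rw [this, Real.sqrt_mul (sq_nonneg t), Real.sqrt_sq ht]

lemma coeff_eq_eval {m : ℕ} (M : Matrix (Fin m) (Fin m) ℂ) (i : ℕ) :
    M.charpoly.coeff i =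
      MvPolynomial.eval (fun p : Fin m × Fin m => M p.1 p.2)
        ((Matrix.charpoly.univ ℂ (Fin m)).coeff i) := by
  have := Matrix.charpoly.univ_coeff_eval₂Hom (Fin m) (RingHom.id ℂ)
    (fun p : Fin m × Fin m => M p.1 p.2) i
  exact this.symm

lemma coeff_continuous {m : ℕ} (i : ℕ) :
    Continuous (fun M : Matrix (Fin m) (Fin m) ℂ => M.charpoly.coeff i) := by
  simp_rw [coeff_eq_eval]
  refine (MvPolynomial.continuous_eval _).comp ?_
  exact continuous_pi fun p => continuous_id.matrix_elem p.1 p.2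

lemma eval_homog {σ : Type*} [Fintype σ] (p : MvPolynomial σ ℂ) (n : ℕ) (hp : p.IsHomogeneous n)
    (t : ℂ) (x : σ → ℂ) :
    MvPolynomial.eval (fun i => t * x i) p = t ^ n * MvPolynomial.eval x p := by
  rw [MvPolynomial.eval_eq', MvPolynomial.eval_eq', Finset.mul_sum]
  refine Finset.sum_congr rfl fun d hd => ?_
  have h := hp (MvPolynomial.mem_support_iff.mp hd)
  have h2 : ∑ i, d i = n := by
    rw [← h, ← Finsupp.degree_eq_sum, Finsupp.degree_eq_weight_one]
    rfl
  simp only [mul_pow, Finset.prod_mul_distrib, Finset.prod_pow_eq_pow_sum, h2]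
  ring

lemma coeff_smul_charpoly {m : ℕ} (M : Matrix (Fin m) (Fin m) ℂ) (t : ℂ) (k : ℕ) (hk : k ≤ m) :
    (t • M).charpoly.coeff (m - k) = t ^ k * M.charpoly.coeff (m - k) := by
  rw [coeff_eq_eval, coeff_eq_eval, ← eval_homog _ k]
  · rfl
  · apply Matrix.charpoly.univ_coeff_isHomogeneous
    simp [hk]

open scoped ComplexOrder in
lemma herm_pow_zero {m : ℕ} (n : ℕ) : ∀ (H : Matrix (Fin m) (Fin m) ℂ), H.IsHermitian →
    H ^ (2 ^ n) = 0 → H = 0 := by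
  induction n with
  | zero => intro H _ h; simpa using h
  | succ n ih =>
    intro H hH h
    rw [pow_succ', pow_mul] at h
    have h2 := ih (H ^ 2) (hH.pow 2) h
    rw [pow_two] at h2
    apply Matrix.conjTranspose_mul_self_eq_zero.mp
    rw [hH.eq, h2]

open scoped ComplexOrder in
lemma normal_nilpotent {m : ℕ} (M : Matrix (Fin m) (Fin m) ℂ) (hM : M * Mᴴ = Mᴴ * M)
    (n : ℕ) (h : M ^ n = 0) : M = 0 := by
  apply Matrix.conjTranspose_mul_self_eq_zero.mp
  apply herm_pow_zero n _ (Matrix.isHermitian_conjTranspose_mul_self M)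
  have hc : Commute Mᴴ M := hM.symm
  rw [hc.mul_pow, pow_eq_zero_of_le (Nat.lt_two_pow_self).le h, mul_zero]

noncomputable def rhsFun {m : ℕ} (M : Matrix (Fin m) (Fin m) ℂ) : ℝ :=
  frobNorm (M * Mᴴ - Mᴴ * M) +
    ∑ k ∈ Finset.Icc 1 m, ‖(Matrix.charpoly M).coeff (m - k)‖ ^ ((2 : ℝ) / (k : ℝ))

lemma rhs_nonneg {m : ℕ} (M : Matrix (Fin m) (Fin m) ℂ) : 0 ≤ rhsFun M :=
  add_nonneg (frob_nonneg _) (Finset.sum_nonneg fun _ _ => by positivity)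

lemma rhs_continuous {m : ℕ} : Continuous (fun M : Matrix (Fin m) (Fin m) ℂ => rhsFun M) := by
  unfold rhsFun
  refine Continuous.add (frob_continuous.comp ?_) (continuous_finsetSum _ fun k _ => ?_)
  · fun_prop
  · exact (continuous_norm.comp (coeff_continuous _)).rpow_const fun _ => Or.inr (by positivity)

lemma rhs_smul {m : ℕ} (M : Matrix (Fin m) (Fin m) ℂ) (t : ℝ) (ht : 0 ≤ t) :
    rhsFun ((t : ℂ) • M) = t ^ 2 * rhsFun M := by
  unfold rhsFun
  rw [mul_add, Finset.mul_sum]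
  congr 1
  · rw [← frob_smul _ _ (sq_nonneg t)]
    congr 1
    ext i j
    simp [Matrix.conjTranspose_smul, smul_smul, pow_two]
    ring
  · refine Finset.sum_congr rfl fun k hk => ?_
    obtain ⟨h1, h2⟩ := Finset.mem_Icc.mp hk
    have hk0 : (k : ℝ) ≠ 0 := by positivity
    rw [coeff_smul_charpoly _ _ _ h2, norm_mul, Real.mul_rpow (norm_nonneg _) (norm_nonneg _)]
    congr 1
    rw [norm_pow, Complex.norm_of_nonneg ht, ← Real.rpow_natCast, ← Real.rpow_mul ht,
      mul_div_cancel₀ _ hk0]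
    exact Real.rpow_two t

lemma rhs_eq_zero {m : ℕ} (M : Matrix (Fin m) (Fin m) ℂ) (h : rhsFun M = 0) : M = 0 := by
  unfold rhsFun at h
  have hs : ∀ k ∈ Finset.Icc 1 m,
      0 ≤ ‖(Matrix.charpoly M).coeff (m - k)‖ ^ ((2 : ℝ) / (k : ℝ)) := fun _ _ => by positivity
  obtain ⟨h1, h2⟩ := (add_eq_zero_iff_of_nonneg (frob_nonneg _) (Finset.sum_nonneg hs)).mp h
  rw [Finset.sum_eq_zero_iff_of_nonneg hs] at h2
  apply normal_nilpotent M (sub_eq_zero.mp (frob_eq_zero h1)) m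
  have hd : M.charpoly.natDegree = m := by simp [Matrix.charpoly_natDegree_eq_dim]
  have hc : M.charpoly = Polynomial.X ^ m := by
    ext i
    rw [Polynomial.coeff_X_pow]
    split_ifs with hi
    · rw [hi]
      have := M.charpoly_monic.coeff_natDegree
      rwa [hd] at this
    · rcases lt_or_gt_of_ne hi with hlt | hgt
      · have := h2 (m - i) (Finset.mem_Icc.mpr ⟨by omega, by omega⟩)
        rw [Real.rpow_eq_zero_iff_of_nonneg (norm_nonneg _)] at this
        rw [Nat.sub_sub_self hlt.le] at this
        exact norm_eq_zero.mp this.1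
      · exact Polynomial.coeff_eq_zero_of_natDegree_lt (by omega)
  have := M.aeval_self_charpoly
  rw [hc] at this
  simpa using this

lemma sphere_compact (m : ℕ) :
    IsCompact {M : Matrix (Fin m) (Fin m) ℂ | frobNorm M = 1} := by
  have hb : IsCompact (Set.univ.pi fun _ : Fin m => Set.univ.pi fun _ : Fin m =>
      Metric.closedBall (0 : ℂ) 1) :=
    isCompact_univ_pi fun _ => isCompact_univ_pi fun _ => isCompact_closedBall _ _
  refine IsCompact.of_isClosed_subset hb (isClosed_eq frob_continuous continuous_const) ?_
  intro M hM i _ j _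
  have := frob_entry_le M i j
  rw [Set.mem_ofPred_eq] at hM
  rw [hM] at this
  simpa using this

lemma sphere_bounds (m : ℕ) : ∃ C : ℝ, 1 ≤ C ∧ ∀ M : Matrix (Fin m) (Fin m) ℂ,
    frobNorm M = 1 → rhsFun M ≤ C ∧ 1 ≤ C * rhsFun M := by
  obtain ⟨D, hD⟩ := (sphere_compact m).bddAbove_image rhs_continuous.continuousOn
  have hpos : ∀ M ∈ {M : Matrix (Fin m) (Fin m) ℂ | frobNorm M = 1}, rhsFun M ≠ 0 := by
    intro M hM h
    rw [Set.mem_ofPred_eq, rhs_eq_zero M h] at hM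
    simp [frobNorm] at hM
  obtain ⟨E, hE⟩ := (sphere_compact m).bddAbove_image (rhs_continuous.continuousOn.inv₀ hpos)
  refine ⟨max 1 (max D E), le_max_left _ _, fun M hM => ⟨?_, ?_⟩⟩
  · exact (hD (Set.mem_image_of_mem _ hM)).trans ((le_max_left _ _).trans (le_max_right _ _))
  · have h1 : (rhsFun M)⁻¹ ≤ max 1 (max D E) :=
      (hE (Set.mem_image_of_mem _ hM)).trans ((le_max_right _ _).trans (le_max_right _ _))
    have h2 : 0 < rhsFun M := lt_of_le_of_ne (rhs_nonneg M) (hpos M hM).symm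
    calc (1 : ℝ) = (rhsFun M)⁻¹ * rhsFun M := (inv_mul_cancel₀ h2.ne').symm
      _ ≤ _ := mul_le_mul_of_nonneg_right h1 h2.le

lemma global_bounds (m : ℕ) : ∃ C : ℝ, 1 ≤ C ∧ ∀ M : Matrix (Fin m) (Fin m) ℂ,
    C⁻¹ * rhsFun M ≤ frobNorm M ^ 2 ∧ frobNorm M ^ 2 ≤ C * rhsFun M := by
  obtain ⟨C, hC, h⟩ := sphere_bounds m
  have hC0 : 0 < C := by linarith
  refine ⟨C, hC, fun M => ?_⟩
  rcases eq_or_ne (frobNorm M) 0 with h0 | h0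
  · have hz : rhsFun M = 0 := by
      have := rhs_smul M 0 le_rfl
      rw [frob_eq_zero h0] at this ⊢
      simpa using this
    simp [hz, h0]
  · have hs : rhsFun M = frobNorm M ^ 2 * rhsFun (((frobNorm M)⁻¹ : ℝ) • M) := by
      have : ((frobNorm M)⁻¹ : ℝ) • M = (((frobNorm M)⁻¹ : ℝ) : ℂ) • M := by
        ext i j; simp
      rw [this, rhs_smul _ _ (inv_nonneg.mpr (frob_nonneg M))]
      field_simp
    have hn : frobNorm (((frobNorm M)⁻¹ : ℝ) • M) = 1 := by
      have : ((frobNorm M)⁻¹ : ℝ) • M = (((frobNorm M)⁻¹ : ℝ) : ℂ) • M := by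
        ext i j; simp
      rw [this, frob_smul _ _ (inv_nonneg.mpr (frob_nonneg M)), inv_mul_cancel₀ h0]
    obtain ⟨h1, h2⟩ := h _ hn
    have hsq : 0 ≤ frobNorm M ^ 2 := sq_nonneg _
    rw [hs]
    constructor
    · rw [inv_mul_le_iff₀ hC0, mul_comm C]
      exact mul_le_mul_of_nonneg_left h1 hsq
    · have := mul_le_mul_of_nonneg_left h2 hsq
      linarith

/-- There exists a constant `C ≥ 1`, depending only on `m`, such that
for every `m × m` complex matrix `M`,
`C⁻¹ (‖[M,M*]‖ + ∑_{k=1}^m |b_k(M)|^{2/k}) ≤ ‖M‖² ≤ C (‖[M,M*]‖ + ∑_{k=1}^m |b_k(M)|^{2/k})`,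
where `b_k(M)` is the coefficient of `λ^{m-k}` in the characteristic polynomial of `M`. -/
theorem matrix_norm_equiv_commutator_charpoly (m : ℕ) :
    ∃ C : ℝ, 1 ≤ C ∧ ∀ M : Matrix (Fin m) (Fin m) ℂ,
      C⁻¹ * (frobNorm (M * Mᴴ - Mᴴ * M) +
          ∑ k ∈ Finset.Icc 1 m,
            ‖(Matrix.charpoly M).coeff (m - k)‖ ^ ((2 : ℝ) / (k : ℝ))) ≤
        frobNorm M ^ 2 ∧
      frobNorm M ^ 2 ≤
        C * (frobNorm (M * Mᴴ - Mᴴ * M) +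
          ∑ k ∈ Finset.Icc 1 m,
            ‖(Matrix.charpoly M).coeff (m - k)‖ ^ ((2 : ℝ) / (k : ℝ))) := by
  exact global_bounds m
end

section
/- Let p be an m×m complex matrix with p² = p, and let π be an m×m complex matrix with π² = π, π* = π, and whose range (column space) equals the range of p. Then ‖π‖² + ‖p − π‖² = ‖p‖² in the Frobenius norm, and moreover ‖π‖² equals the rank of p. -/
open Matrix

theorem frobNorm_sq_eq_trace {m : ℕ} (A : Matrix (Fin m) (Fin m) ℂ) :
    ((frobNorm A ^ 2 : ℝ) : ℂ) = (A * Aᴴ).trace := by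
  unfold frobNorm
  rw [Real.sq_sqrt (by positivity)]
  simp [Matrix.trace, Matrix.mul_apply, Complex.mul_conj, Complex.normSq_eq_norm_sq]

theorem mul_eq_of_range_le {m : ℕ} {p q : Matrix (Fin m) (Fin m) ℂ} (hq : q * q = q)
    (h : LinearMap.range p.mulVecLin ≤ LinearMap.range q.mulVecLin) : q * p = p := by
  apply Matrix.mulVec_injective
  funext v
  obtain ⟨w, hw⟩ := h ⟨v, rfl⟩
  simp only [Matrix.mulVecLin_apply] at hw
  rw [← Matrix.mulVec_mulVec, ← hw, Matrix.mulVec_mulVec, hq]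

/-- Let `p` be an idempotent `m × m` complex matrix and `q` the Hermitian
idempotent (orthogonal projection) with the same range. Then
`‖q‖² + ‖p − q‖² = ‖p‖²` in the Frobenius norm, and `‖q‖²` equals the rank of `p`. -/
theorem frobNorm_sq_projection_pythagoras (m : ℕ) (p q : Matrix (Fin m) (Fin m) ℂ)
    (hp : p * p = p) (hq : q * q = q) (hqs : qᴴ = q)
    (hrange : LinearMap.range q.mulVecLin = LinearMap.range p.mulVecLin) :
    frobNorm q ^ 2 + frobNorm (p - q) ^ 2 = frobNorm p ^ 2 ∧
      frobNorm q ^ 2 = (p.rank : ℝ) := by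
  have hqp : q * p = p := mul_eq_of_range_le hq hrange.ge
  have hpq : p * q = q := mul_eq_of_range_le hp hrange.le
  have hqp' : q * pᴴ = q := by
    have h := congrArg Matrix.conjTranspose hpq
    rwa [Matrix.conjTranspose_mul, hqs] at h
  constructor
  · apply Complex.ofReal_injective
    rw [Complex.ofReal_add]
    simp only [frobNorm_sq_eq_trace]
    rw [Matrix.conjTranspose_sub, hqs, ← Matrix.trace_add]
    congr 1
    rw [sub_mul, mul_sub, mul_sub, hq, hpq, hqp']
    abel
  · apply Complex.ofReal_injective
    rw [frobNorm_sq_eq_trace, hqs, hq]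
    have hproj : LinearMap.IsProj (LinearMap.range q.mulVecLin) (Matrix.toLin' q) := by
      refine ⟨fun x => ⟨x, rfl⟩, ?_⟩
      rintro _ ⟨w, rfl⟩
      simp [Matrix.mulVec_mulVec, hq]
    have h := hproj.trace
    rw [Matrix.trace_toLin'_eq] at h
    rw [h, hrange, Matrix.rank]
    simp
end
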